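/- For S = {±1, ±5, ±8}, χ(1, 5, 8) = 4: there exists a Borel proper 4-coloring of the Schreier graph G_S on F(2^ℤ), but there is no Borel proper 3-coloring. -/

import Mathlib

/-- The shift action of `ℤ` on `α^ℤ`: `(s · x)(n) = x(n + s)`. -/
def shift {α : Type*} (s : ℤ) (x : ℤ → α) : ℤ → α := fun n => x (n + s)

/-- The free part `F(2^ℤ)` of the shift action on `2^ℤ = (ℤ → Bool)`. -/
def FreePart : Set (ℤ → Bool) := {x | ∀ s : ℤ, s ≠ 0 → shift s x ≠ x}

/-- `c` is a Borel proper coloring of the Schreier graph `G_S` on `F(2^ℤ)`,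
where `S = {±a : a ∈ A}`: `c` is Borel and `c(x) ≠ c(s · x)` for all `x` and `s ∈ S`. -/
def IsBorelColoring (A : Finset ℕ) {k : ℕ}
    (c : {x : ℤ → Bool // x ∈ FreePart} → Fin k) : Prop :=
  Measurable c ∧
    ∀ (x : {x : ℤ → Bool // x ∈ FreePart}) (a : ℕ), a ∈ A →
      ∀ (h : shift (a : ℤ) x.1 ∈ FreePart), c x ≠ c ⟨shift (a : ℤ) x.1, h⟩

/-- The Borel chromatic number `χ(a₁, …, aₙ)` of the Schreier graph `G_S` on `F(2^ℤ)`,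
where `S = {±a : a ∈ A}`: the least `k` admitting a Borel proper `k`-coloring. -/
noncomputable def borelChromatic (A : Finset ℕ) : ℕ :=
  sInf {k : ℕ | ∃ c : {x : ℤ → Bool // x ∈ FreePart} → Fin k, IsBorelColoring A c}

/-!
*Lower bound.* A finite case analysis shows that every proper 3-coloring of the distance graph of
`ℤ` with distances 1, 5, 8 is 3-periodic. On the other hand the shift is topologically mixing, so
if a Borel coloring of `F(2^ℤ)` has countably many colors, then a nonmeager color class meets its
translate by `t` for all but finitely many `t`. For `t ≡ 1 mod 3` these two facts contradict
properness at distance 1.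

*Upper bound.* A maximal Borel set without two points at distance at most 11 cuts every orbit into
intervals of length at least 12. Since every such length has the form `3a + 7b`, the orbit is tiled
by intervals of length 3 and 7; color them by the words `012` and `0120123`. Erasing the letters
`3` leaves the 3-periodic sequence. Distinct letters `3` have distance 7 or at least 10, so two
positions at distance 1, 5 or 8 are not both colored `3`, and if neither is, then at most one `3`
lies strictly between them. In the erased sequence they have distance 1, 4, 5, 7 or 8, which is
never a multiple of 3.
-/

open Filter Topology

section ShiftSpace

variable {α : Type*}

theorem shift_zero (x : ℤ → α) : shift 0 x = x := by
  funext n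
  simp [shift]

theorem shift_add (s t : ℤ) (x : ℤ → α) : shift (s + t) x = shift s (shift t x) := by
  funext n
  simp [shift, add_assoc]

variable [TopologicalSpace α]

theorem continuous_shift (s : ℤ) : Continuous (shift s : (ℤ → α) → ℤ → α) :=
  continuous_pi fun n => continuous_apply (n + s)

/-- The shift by `s` as a homeomorphism of `α^ℤ`. -/
def shiftHomeomorph (s : ℤ) : (ℤ → α) ≃ₜ (ℤ → α) where
  toFun := shift s
  invFun := shift (-s)
  left_inv x := by rw [← shift_add, neg_add_cancel, shift_zero]
  right_inv x := by rw [← shift_add, add_neg_cancel, shift_zero]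
  continuous_toFun := continuous_shift s
  continuous_invFun := continuous_shift (-s)

theorem isOpenMap_shift (s : ℤ) : IsOpenMap (shift s : (ℤ → α) → ℤ → α) :=
  (shiftHomeomorph s).isOpenMap

theorem eventually_nonempty_inter_shift_preimage {U V : Set (ℤ → α)} (hU : IsOpen U)
    (hU₀ : U.Nonempty) (hV : IsOpen V) (hV₀ : V.Nonempty) :
    ∀ᶠ t in cofinite, (U ∩ shift t ⁻¹' V).Nonempty := by
  classical
  obtain ⟨x, hx⟩ := hU₀
  obtain ⟨y, hy⟩ := hV₀
  obtain ⟨I, u, hu, hIU⟩ := isOpen_pi_iff.1 hU x hx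
  obtain ⟨J, v, hv, hJV⟩ := isOpen_pi_iff.1 hV y hy
  have h_overlap : {t : ℤ | ∃ i ∈ I, ∃ j ∈ J, j + t = i}.Finite :=
    (Finset.image₂ (· - ·) I J).finite_toSet.subset <| by
      rintro t ⟨i, hi, j, hj, rfl⟩
      exact Finset.mem_image₂.2 ⟨_, hi, j, hj, add_sub_cancel_left j t⟩
  filter_upwards [h_overlap.compl_mem_cofinite] with t ht
  refine ⟨fun n => if n ∈ I then x n else y (n - t), hIU fun i hi => ?_, hJV fun j hj => ?_⟩
  · simpa [Finset.mem_coe.1 hi] using (hu i hi).2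
  · have hjt : j + t ∉ I := fun h => ht ⟨_, h, j, hj, rfl⟩
    simpa [shift, hjt] using (hv j hj).2

theorem eventually_not_isMeagre_inter_shift_preimage [BaireSpace (ℤ → α)] {B : Set (ℤ → α)}
    (hB : BaireMeasurableSet B) (hB₀ : ¬IsMeagre B) :
    ∀ᶠ t in cofinite, ¬IsMeagre (B ∩ shift t ⁻¹' B) := by
  obtain ⟨U, hU, hBU⟩ := hB.residualEq_isOpen
  have isMeagre_congr {s t : Set (ℤ → α)} (h : s =ᵇ t) : IsMeagre s ↔ IsMeagre t :=
    congr_sets (eventuallyEq_set.1 h.compl)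
  have hU₀ : U.Nonempty := nonempty_of_not_isMeagre ((isMeagre_congr hBU).not.1 hB₀)
  filter_upwards [eventually_nonempty_inter_shift_preimage hU hU₀ hU hU₀] with t ht
  have h_shift : shift t ⁻¹' B =ᵇ shift t ⁻¹' U :=
    (tendsto_residual_of_isOpenMap (continuous_shift t) (isOpenMap_shift t)).eventually hBU
  exact (isMeagre_congr (hBU.inter h_shift)).not.2
    (not_isMeagre_of_isOpen (hU.inter (hU.preimage (continuous_shift t))) ht)

theorem dense_setOf_shift_ne [Nontrivial α] {s : ℤ} (hs : s ≠ 0) :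
    Dense {x : ℤ → α | shift s x ≠ x} := by
  classical
  refine dense_iff_inter_open.2 fun U hU ⟨x, hx⟩ => ?_
  obtain ⟨I, u, hu, hIU⟩ := isOpen_pi_iff.1 hU x hx
  obtain ⟨k, hk⟩ := Infinite.exists_notMem_finset I
  obtain ⟨b, hb⟩ := exists_ne (x (k + s))
  refine ⟨Function.update x k b, hIU fun i hi => ?_, fun h => hb ?_⟩
  · rw [Function.update_of_ne (ne_of_mem_of_not_mem hi hk)]
    exact (hu i hi).2
  · simpa [shift, hs] using (congrFun h k).symm

end ShiftSpace

section FreePart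

theorem shift_mem_freePart (s : ℤ) {x : ℤ → Bool} (hx : x ∈ FreePart) : shift s x ∈ FreePart := by
  intro t ht h
  refine hx t ht ((shiftHomeomorph s).injective ?_)
  change shift s (shift t x) = shift s x
  rwa [← shift_add, add_comm, shift_add]

instance : AddAction ℤ FreePart where
  vadd s x := ⟨shift s x, shift_mem_freePart s x.2⟩
  zero_vadd x := Subtype.ext (shift_zero x.1)
  add_vadd s t x := Subtype.ext (shift_add s t x.1)

instance : IsCancelVAdd ℤ FreePart :=
  isCancelVAdd_iff_eq_zero_of_vadd_eq.2 fun s x h =>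
    by_contra fun hs => x.2 s hs (congrArg Subtype.val h)

instance : MeasurableConstVAdd ℤ FreePart where
  measurable_const_vadd s :=
    ((continuous_shift s).measurable.comp measurable_subtype_coe).subtype_mk

theorem freePart_eq_iInter : FreePart = ⋂ s : {s : ℤ // s ≠ 0}, {x | shift s.1 x ≠ x} := by
  ext x
  simp [FreePart]

theorem isOpen_setOf_shift_ne (s : ℤ) : IsOpen {x : ℤ → Bool | shift s x ≠ x} :=
  isOpen_ne_fun (continuous_shift s) continuous_id

theorem measurableSet_freePart : MeasurableSet FreePart := by
  rw [freePart_eq_iInter]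
  exact .iInter fun s => (isOpen_setOf_shift_ne s.1).measurableSet

theorem freePart_mem_residual : FreePart ∈ residual (ℤ → Bool) := by
  rw [freePart_eq_iInter, countable_iInter_mem]
  exact fun s => residual_of_dense_open (isOpen_setOf_shift_ne s.1) (dense_setOf_shift_ne s.2)

theorem not_isMeagre_freePart : ¬IsMeagre FreePart := fun h => by
  have := (dense_of_mem_residual (inter_mem freePart_mem_residual h)).nonempty
  simp at this

theorem eventually_exists_apply_vadd_eq {α : Type*} [Countable α] [MeasurableSpace α]
    [MeasurableSingletonClass α] {c : FreePart → α} (hc : Measurable c) :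
    ∀ᶠ t : ℤ in cofinite, ∃ x, c (t +ᵥ x) = c x := by
  let B (i : α) : Set (ℤ → Bool) := Subtype.val '' (c ⁻¹' {i})
  have hB (i : α) : MeasurableSet (B i) :=
    measurableSet_freePart.subtype_image (hc (measurableSet_singleton i))
  obtain ⟨i, hi⟩ : ∃ i, ¬IsMeagre (B i) := by
    by_contra! h
    have h_cover : FreePart ⊆ ⋃ i, B i :=
      fun x hx => Set.mem_iUnion.2 ⟨c ⟨x, hx⟩, ⟨x, hx⟩, rfl, rfl⟩
    exact not_isMeagre_freePart ((isMeagre_iUnion h).mono h_cover)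
  filter_upwards [eventually_not_isMeagre_inter_shift_preimage (hB i).baireMeasurableSet hi]
    with t ht
  obtain ⟨_, ⟨x, rfl, rfl⟩, y, hy, hyx⟩ := nonempty_of_not_isMeagre ht
  obtain rfl : y = t +ᵥ x := Subtype.ext hyx
  exact ⟨x, hy⟩

end FreePart

section DistanceColoring

variable {α : Type*} {A : Finset ℕ}

/-- `f` is a proper coloring of the distance graph of `ℤ` with distance set `A`: integers at
a distance in `A` get different values. -/
def IsDistanceColoring (A : Finset ℕ) (f : ℤ → α) : Prop :=
  ∀ n : ℤ, ∀ a ∈ A, f n ≠ f (n + a)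

theorem isBorelColoring_iff {k : ℕ} {c : FreePart → Fin k} :
    IsBorelColoring A c ↔
      Measurable c ∧ ∀ x, IsDistanceColoring A fun n : ℤ => c (n +ᵥ x) := by
  refine and_congr_right fun _ => ⟨fun h x n a ha => ?_, fun h x a ha hx => ?_⟩
  · change c (n +ᵥ x) ≠ c ((n + (a : ℤ)) +ᵥ x)
    rw [add_comm, add_vadd]
    exact h (n +ᵥ x) a ha (shift_mem_freePart a (n +ᵥ x).2)
  · change c x ≠ c ((a : ℤ) +ᵥ x)
    simpa using h x 0 a ha

theorem IsBorelColoring.castLE {k l : ℕ} (hkl : k ≤ l) {c : FreePart → Fin k}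
    (hc : IsBorelColoring A c) : IsBorelColoring A (Fin.castLE hkl ∘ c) :=
  ⟨(measurable_of_countable _).comp hc.1,
    fun x a ha hx => (Fin.castLE_injective hkl).ne (hc.2 x a ha hx)⟩

theorem borelChromatic_eq_succ_iff {k : ℕ} :
    borelChromatic A = k + 1 ↔ (∃ c : FreePart → Fin (k + 1), IsBorelColoring A c) ∧
      ¬∃ c : FreePart → Fin k, IsBorelColoring A c :=
  Nat.sInf_upward_closed_eq_succ_iff (s := {k | ∃ c : FreePart → Fin k, IsBorelColoring A c})
    (fun _ _ hkl ⟨_, hc⟩ => ⟨_, hc.castLE hkl⟩) k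

theorem IsDistanceColoring.comp_const_add {f : ℤ → α} (hf : IsDistanceColoring A f) (n : ℤ) :
    IsDistanceColoring A fun i => f (n + i) := fun i a ha => by
  simpa only [add_assoc] using hf (n + i) a ha

theorem IsDistanceColoring.apply_zero_eq_apply_three {f : ℤ → Fin 3}
    (hf : IsDistanceColoring {1, 5, 8} f) : f 0 = f 3 := by
  have h_one (i : ℤ) : f i ≠ f (i + 1) := hf i 1 (by decide)
  have h_five (i : ℤ) : f i ≠ f (i + 5) := hf i 5 (by decide)
  have h_eight (i : ℤ) : f i ≠ f (i + 8) := hf i 8 (by decide)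
  by_contra h_ne
  -- `8` is adjacent to `0` and `3`, so these three points have all three colors; every equation
  -- below is forced by two neighbors that have the other two colors.
  have h₂ : f 2 = f 0 ∨ f 2 = f 8 := by grind
  rcases h₂ with h₂ | h₂
  · have h₇ : f 7 = f 3 := by grind
    have h₆ : f 6 = f 0 ∨ f 6 = f 8 := by grind
    rcases h₆ with h₆ | h₆
    · have h₁₁ : f 11 = f 8 := by grind
      have h₁₀ : f 10 = f 3 := by grind
      have h₉ : f 9 = f 0 := by grind
      have h₅ : f 5 = f 8 := by grind
      have h₄ : f 4 = f 0 := by grind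
      exact h_five 4 (h₄.trans h₉.symm)
    · have h₁ : f 1 = f 3 := by grind
      have h₉ : f 9 = f 0 := by grind
      have h₁₁ : f 11 = f 0 := by grind
      have h₁₂ : f 12 = f 8 := by grind
      have h₄ : f 4 = f 0 := by grind
      exact h_five 4 (h₄.trans h₉.symm)
  · have h₁ : f 1 = f 3 := by grind
    have h₉ : f 9 = f 0 := by grind
    have h₁₀ : f 10 = f 3 := by grind
    have h₄ : f 4 = f 8 := by grind
    have h₅ : f 5 = f 3 := by grind
    exact h_five 5 (h₅.trans h₁₀.symm)

theorem IsDistanceColoring.periodic_three {f : ℤ → Fin 3} (hf : IsDistanceColoring {1, 5, 8} f) :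
    Function.Periodic f 3 := fun n => by
  simpa using (hf.comp_const_add n).apply_zero_eq_apply_three.symm

theorem not_exists_isBorelColoring_three :
    ¬∃ c : FreePart → Fin 3, IsBorelColoring {1, 5, 8} c := by
  rintro ⟨c, hc⟩
  obtain ⟨hc_meas, hc_orbit⟩ := isBorelColoring_iff.1 hc
  have h_injective : Function.Injective fun k : ℤ => k * 3 + 1 := fun k l h => by
    simpa using h
  obtain ⟨k, x, hx⟩ :=
    (h_injective.tendsto_cofinite.eventually (eventually_exists_apply_vadd_eq hc_meas)).exists
  have h_period : c ((k * 3 + 1) +ᵥ x) = c ((1 : ℤ) +ᵥ x) := by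
    simpa [add_comm] using (hc_orbit x).periodic_three.int_mul k 1
  have h_proper : c x ≠ c ((1 : ℤ) +ᵥ x) := by
    simpa using hc_orbit x 0 1 (by decide)
  exact h_proper (hx.symm.trans h_period)

end DistanceColoring

section MaximalIndependentSet

variable {G X : Type*} [AddGroup G] [AddAction G X] {F : Set G}

/-- `A` is an independent set of the Schreier graph on `X` which joins `x` to `g +ᵥ x` for
`g ∈ F`. -/
def IsIndependent (F : Set G) (A : Set X) : Prop :=
  ∀ x ∈ A, ∀ g ∈ F, g +ᵥ x ∉ A

theorem IsIndependent.iUnion {A : ℕ → Set X} (hA : ∀ n, IsIndependent F (A n))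
    (h_mono : Monotone A) : IsIndependent F (⋃ n, A n) := by
  intro x hx g hg hgx
  obtain ⟨m, hm⟩ := Set.mem_iUnion.1 hx
  obtain ⟨n, hn⟩ := Set.mem_iUnion.1 hgx
  exact hA (max m n) x (h_mono (le_max_left m n) hm) g hg (h_mono (le_max_right m n) hn)

/-- The greedy construction of a maximal independent set: stage `n + 1` adds the points of `A n`
without a neighbor in stage `n`. -/
def greedyIndependent (F : Set G) (A : ℕ → Set X) : ℕ → Set X
  | 0 => ∅
  | n + 1 => greedyIndependent F A n ∪ {x ∈ A n | ∀ g ∈ F, g +ᵥ x ∉ greedyIndependent F A n}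

theorem monotone_greedyIndependent (A : ℕ → Set X) : Monotone (greedyIndependent F A) :=
  monotone_nat_of_le_succ fun _ => Set.subset_union_left

theorem isIndependent_greedyIndependent (hF : ∀ g ∈ F, -g ∈ F) {A : ℕ → Set X}
    (hA : ∀ n, IsIndependent F (A n)) (n : ℕ) : IsIndependent F (greedyIndependent F A n) := by
  induction n with
  | zero => exact fun x hx => hx.elim
  | succ n ih =>
    rintro x (hx | ⟨hxA, hx⟩) g hg (hgx | ⟨hgxA, hgx⟩)
    · exact ih x hx g hg hgx
    · exact hgx (-g) (hF g hg) (by rwa [neg_vadd_vadd])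
    · exact hx g hg hgx
    · exact hA n x hxA g hg hgxA

variable [MeasurableSpace X] [MeasurableConstVAdd G X]

theorem measurableSet_setOf_forall_vadd_notMem (hF : F.Countable) {A : Set X}
    (hA : MeasurableSet A) : MeasurableSet {x | ∀ g ∈ F, g +ᵥ x ∉ A} := by
  simp only [Set.ofPred_forall]
  exact .biInter hF fun g _ => (measurable_const_vadd g hA).compl

theorem measurableSet_greedyIndependent (hF : F.Countable) {A : ℕ → Set X}
    (hA : ∀ n, MeasurableSet (A n)) (n : ℕ) : MeasurableSet (greedyIndependent F A n) := by
  induction n with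
  | zero => exact .empty
  | succ n ih => exact ih.union ((hA n).inter (measurableSet_setOf_forall_vadd_notMem hF ih))

theorem exists_measurableSet_maximal_isIndependent (hF : F.Countable) (hF_neg : ∀ g ∈ F, -g ∈ F)
    {A : ℕ → Set X} (hA : ∀ n, MeasurableSet (A n)) (hA_indep : ∀ n, IsIndependent F (A n))
    (hA_cover : ⋃ n, A n = Set.univ) :
    ∃ M : Set X, MeasurableSet M ∧ IsIndependent F M ∧ ∀ x ∉ M, ∃ g ∈ F, g +ᵥ x ∈ M := by
  refine ⟨⋃ n, greedyIndependent F A n, .iUnion (measurableSet_greedyIndependent hF hA),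
    .iUnion (isIndependent_greedyIndependent hF_neg hA_indep) (monotone_greedyIndependent A),
    fun x hx => ?_⟩
  obtain ⟨n, hn⟩ := Set.mem_iUnion.1 (hA_cover.symm ▸ Set.mem_univ x)
  by_contra! h
  exact hx (Set.mem_iUnion.2
    ⟨n + 1, .inr ⟨hn, fun g hg hgx => h g hg (Set.mem_iUnion.2 ⟨n, hgx⟩)⟩⟩)

theorem exists_measurableSet_isIndependent_cover [MeasurableSpace.CountablySeparated X]
    (hF : F.Finite) (hF_free : ∀ g ∈ F, ∀ x : X, g +ᵥ x ≠ x) :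
    ∃ A : ℕ → Set X, (∀ n, MeasurableSet (A n)) ∧ (∀ n, IsIndependent F (A n)) ∧
      ⋃ n, A n = Set.univ := by
  obtain ⟨e, he, he_inj⟩ := MeasurableSpace.measurable_injection_nat_bool_of_countablySeparated X
  let cylinder (q : Σ m, Fin m → Bool) : Set X := {x | ∀ i : Fin q.1, e x i = q.2 i}
  have h_cylinder (q) : MeasurableSet (cylinder q) := by
    simp only [cylinder, Set.ofPred_forall]
    exact .iInter fun i => (measurable_pi_apply _).comp he (measurableSet_singleton (q.2 i))
  let A (q : Σ m, Fin m → Bool) : Set X := {x ∈ cylinder q | ∀ g ∈ F, g +ᵥ x ∉ cylinder q}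
  have hA (q) : MeasurableSet (A q) :=
    (h_cylinder q).inter (measurableSet_setOf_forall_vadd_notMem hF.countable (h_cylinder q))
  have hA_indep (q) : IsIndependent F (A q) := fun x hx g hg hgx => hx.2 g hg hgx.1
  have hA_cover (x : X) : ∃ q, x ∈ A q := by
    have h_sep (g) (hg : g ∈ F) : ∃ i, e (g +ᵥ x) i ≠ e x i :=
      Function.ne_iff.1 (he_inj.ne (hF_free g hg x))
    choose! i hi using h_sep
    obtain ⟨m, hm⟩ := (hF.image i).bddAbove
    refine ⟨⟨m + 1, fun j => e x j⟩, fun _ => rfl, fun g hg hgx => hi g hg ?_⟩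
    exact hgx ⟨i g, Nat.lt_succ_of_le (hm (Set.mem_image_of_mem i hg))⟩
  obtain ⟨q, hq⟩ := exists_surjective_nat (Σ m, Fin m → Bool)
  refine ⟨A ∘ q, fun n => hA _, fun n => hA_indep _, ?_⟩
  exact (hq.iUnion_comp A).trans (Set.iUnion_eq_univ_iff.2 hA_cover)

end MaximalIndependentSet

section Marker

variable {X : Type*} [AddAction ℤ X] [MeasurableSpace X] {M : Set X} {N : ℕ}

/-- A Borel set which meets every orbit of the `ℤ`-action in a maximal set of points with mutual
distances greater than `N`. -/
structure IsMarkerSet (N : ℕ) (M : Set X) : Prop where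
  measurableSet : MeasurableSet M
  vadd_notMem : ∀ x ∈ M, ∀ n : ℤ, n ≠ 0 → |n| ≤ N → n +ᵥ x ∉ M
  exists_vadd_mem : ∀ x, ∃ n : ℤ, |n| ≤ N ∧ n +ᵥ x ∈ M

theorem exists_isMarkerSet [IsCancelVAdd ℤ X] [MeasurableConstVAdd ℤ X]
    [MeasurableSpace.CountablySeparated X] (N : ℕ) : ∃ M : Set X, IsMarkerSet N M := by
  let F : Set ℤ := {n | n ≠ 0 ∧ |n| ≤ N}
  have hF : F.Finite := (Set.finite_Icc (-N : ℤ) N).subset fun n hn => abs_le.1 hn.2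
  have hF_neg : ∀ n ∈ F, -n ∈ F := fun n hn => ⟨neg_ne_zero.2 hn.1, (abs_neg n).trans_le hn.2⟩
  obtain ⟨A, hA, hA_indep, hA_cover⟩ := exists_measurableSet_isIndependent_cover hF
    fun n hn (x : X) h => hn.1 (IsCancelVAdd.eq_zero_of_vadd h)
  obtain ⟨M, hM, hM_indep, hM_max⟩ :=
    exists_measurableSet_maximal_isIndependent hF.countable hF_neg hA hA_indep hA_cover
  refine ⟨M, hM, fun x hx n hn₀ hn => hM_indep x hx n ⟨hn₀, hn⟩, fun x => ?_⟩
  by_cases hx : x ∈ M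
  · exact ⟨0, by simp, by rwa [zero_vadd]⟩
  · obtain ⟨n, hn, hnx⟩ := hM_max x hx
    exact ⟨n, hn.2, hnx⟩

namespace IsMarkerSet

theorem exists_mem_past (hM : IsMarkerSet N M) (x : X) : ∃ p : ℕ, (-p : ℤ) +ᵥ x ∈ M := by
  obtain ⟨n, hn, hnx⟩ := hM.exists_vadd_mem ((-N : ℤ) +ᵥ x)
  obtain ⟨p, hp⟩ := Int.eq_ofNat_of_zero_le (a := N - n) (by grind)
  refine ⟨p, ?_⟩
  rwa [← hp, neg_sub, sub_eq_add_neg, add_vadd]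

theorem exists_mem_future (hM : IsMarkerSet N M) (x : X) : ∃ q : ℕ, (q + 1 : ℤ) +ᵥ x ∈ M := by
  obtain ⟨n, hn, hnx⟩ := hM.exists_vadd_mem ((N + 1 : ℤ) +ᵥ x)
  obtain ⟨q, hq⟩ := Int.eq_ofNat_of_zero_le (a := n + N) (by grind)
  refine ⟨q, ?_⟩
  rwa [← hq, add_assoc, add_vadd]

open scoped Classical in
/-- The number of steps back from `x` to the last visit to `M`, which may be at `x` itself. -/
noncomputable def timeSince (hM : IsMarkerSet N M) (x : X) : ℕ :=
  Nat.find (hM.exists_mem_past x)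

open scoped Classical in
/-- The number of steps from `1 +ᵥ x` to the next visit to `M`, which may be at `1 +ᵥ x` itself. -/
noncomputable def timeUntil (hM : IsMarkerSet N M) (x : X) : ℕ :=
  Nat.find (hM.exists_mem_future x)

variable (hM : IsMarkerSet N M) {x : X}

theorem timeSince_vadd_of_mem (hx : (1 : ℤ) +ᵥ x ∈ M) : hM.timeSince ((1 : ℤ) +ᵥ x) = 0 := by
  simpa [timeSince] using hx

theorem timeUntil_of_mem (hx : (1 : ℤ) +ᵥ x ∈ M) : hM.timeUntil x = 0 := by
  simpa [timeUntil] using hx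

theorem timeSince_vadd_of_notMem (hx : (1 : ℤ) +ᵥ x ∉ M) :
    hM.timeSince ((1 : ℤ) +ᵥ x) = hM.timeSince x + 1 := by
  have h_shift (p : ℕ) : (-(p + 1 : ℕ) : ℤ) +ᵥ (1 : ℤ) +ᵥ x = (-p : ℤ) +ᵥ x := by
    rw [vadd_vadd, Nat.cast_succ, neg_add, neg_add_cancel_right]
  classical
  simp only [timeSince, ← h_shift]
  exact Nat.find_comp_succ (hM.exists_mem_past _) _ (by simpa using hx)

theorem timeUntil_vadd_of_notMem (hx : (1 : ℤ) +ᵥ x ∉ M) :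
    hM.timeUntil ((1 : ℤ) +ᵥ x) + 1 = hM.timeUntil x := by
  have h_shift (q : ℕ) : (q + 1 : ℤ) +ᵥ (1 : ℤ) +ᵥ x = ((q + 1 : ℕ) + 1 : ℤ) +ᵥ x := by
    rw [vadd_vadd, Nat.cast_succ]
  classical
  simp only [timeUntil, h_shift]
  exact (Nat.find_comp_succ (hM.exists_mem_future _) _ (by simpa using hx)).symm

theorem lt_timeSince_add_timeUntil_add_one (x : X) : N < hM.timeSince x + hM.timeUntil x + 1 := by
  classical
  have h_past : (-hM.timeSince x : ℤ) +ᵥ x ∈ M := Nat.find_spec (hM.exists_mem_past x)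
  have h_future : (hM.timeUntil x + 1 : ℤ) +ᵥ x ∈ M := Nat.find_spec (hM.exists_mem_future x)
  by_contra! h
  refine hM.vadd_notMem _ h_past (hM.timeSince x + hM.timeUntil x + 1) (by grind) (by grind) ?_
  rw [vadd_vadd]
  convert h_future using 2
  ring

variable [MeasurableConstVAdd ℤ X]

theorem measurable_timeSince : Measurable hM.timeSince := by
  classical
  exact measurable_find _ fun _ => measurable_const_vadd _ hM.measurableSet

theorem measurable_timeUntil : Measurable hM.timeUntil := by
  classical
  exact measurable_find _ fun _ => measurable_const_vadd _ hM.measurableSet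

end IsMarkerSet

end Marker

section ClosedWalk

variable {V : Type*} {r : V → V → Prop} {v : V}

/-- `w 0, …, w n` is a closed walk at `v` in the digraph `r`; later values of `w` are irrelevant. -/
def IsClosedWalk (r : V → V → Prop) (v : V) (n : ℕ) (w : ℕ → V) : Prop :=
  w 0 = v ∧ w n = v ∧ ∀ p < n, r (w p) (w (p + 1))

theorem IsClosedWalk.append {m n : ℕ} {w w' : ℕ → V} (hw : IsClosedWalk r v m w)
    (hw' : IsClosedWalk r v n w') :
    IsClosedWalk r v (m + n) fun p => if p < m then w p else w' (p - m) := by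
  grind [IsClosedWalk]

/-- The lengths of closed walks at `v` in the digraph `r`. -/
def closedWalkLengths (r : V → V → Prop) (v : V) : AddSubmonoid ℕ where
  carrier := {n | ∃ w, IsClosedWalk r v n w}
  zero_mem' := ⟨fun _ => v, rfl, rfl, by simp⟩
  add_mem' := fun ⟨_, hw⟩ ⟨_, hw'⟩ => ⟨_, hw.append hw'⟩

theorem mem_closedWalkLengths_of_coprime {m n k : ℕ} (h_coprime : m.Coprime n) (hm : 1 < m)
    (hn : 1 < n) (hmr : m ∈ closedWalkLengths r v) (hnr : n ∈ closedWalkLengths r v)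
    (hk : m * n - m - n < k) : k ∈ closedWalkLengths r v := by
  have h_le : AddSubmonoid.closure {m, n} ≤ closedWalkLengths r v :=
    AddSubmonoid.closure_le.2 (Set.pair_subset hmr hnr)
  refine h_le (by_contra fun h => hk.not_ge ?_)
  exact (frobeniusNumber_pair h_coprime hm hn).2 h

variable {X : Type*} [AddAction ℤ X] [MeasurableSpace X] [MeasurableConstVAdd ℤ X]
  [IsCancelVAdd ℤ X] [MeasurableSpace.CountablySeparated X] [MeasurableSpace V]

theorem exists_measurable_walk_of_forall_mem_closedWalkLengths {N : ℕ}
    (hr : ∀ n, N < n → n ∈ closedWalkLengths r v) :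
    ∃ f : X → V, Measurable f ∧ ∀ x, r (f x) (f ((1 : ℤ) +ᵥ x)) := by
  have : Nonempty V := ⟨v⟩
  choose! w hw₀ hw_last hw_step using hr
  obtain ⟨M, hM⟩ := exists_isMarkerSet (X := X) N
  let f (x : X) : V := w (hM.timeSince x + hM.timeUntil x + 1) (hM.timeSince x)
  refine ⟨f, ?_, fun x => ?_⟩
  · exact (measurable_of_countable fun t : ℕ × ℕ => w (t.1 + t.2 + 1) t.1).comp
      (hM.measurable_timeSince.prodMk hM.measurable_timeUntil)
  have hN := hM.lt_timeSince_add_timeUntil_add_one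
  suffices h : f ((1 : ℤ) +ᵥ x) =
      w (hM.timeSince x + hM.timeUntil x + 1) (hM.timeSince x + 1) by
    rw [h]
    exact hw_step _ (hN x) _ (by grind)
  by_cases hx : (1 : ℤ) +ᵥ x ∈ M
  · have h_len := hN x
    rw [hM.timeUntil_of_mem hx, add_zero] at h_len ⊢
    simp only [f, hM.timeSince_vadd_of_mem hx]
    rw [hw_last _ h_len, hw₀ _ (by simpa [hM.timeSince_vadd_of_mem hx] using hN ((1 : ℤ) +ᵥ x))]
  · simp only [f, hM.timeSince_vadd_of_notMem hx, ← hM.timeUntil_vadd_of_notMem hx]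
    congr 1
    ring

theorem exists_measurable_walk_of_coprime {m n : ℕ} (h_coprime : m.Coprime n) (hm : 1 < m)
    (hn : 1 < n) (hmr : m ∈ closedWalkLengths r v) (hnr : n ∈ closedWalkLengths r v) :
    ∃ f : X → V, Measurable f ∧ ∀ x, r (f x) (f ((1 : ℤ) +ᵥ x)) :=
  exists_measurable_walk_of_forall_mem_closedWalkLengths fun _ =>
    mem_closedWalkLengths_of_coprime h_coprime hm hn hmr hnr

end ClosedWalk

section Tiling

/-- The possible successors of a letter in a concatenation of the words `0 1 2` and
`0 1 2 3 4 5 6`. The walks of this digraph are the tilings of `ℤ` by intervals of length 3 and 7. -/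
def tileSucc (i : Fin 7) : Finset (Fin 7) :=
  if i = 2 then {3, 0} else {i + 1}

/-- The coloring of the two tiles by `012` and `0120123`. -/
def tileColor : Fin 7 → Fin 4 :=
  ![0, 1, 2, 0, 1, 2, 3]

theorem three_mem_closedWalkLengths_tileSucc :
    3 ∈ closedWalkLengths (fun i j => j ∈ tileSucc i) 0 :=
  ⟨fun p => Fin.ofNat 7 (p % 3), by unfold IsClosedWalk; decide⟩

theorem seven_mem_closedWalkLengths_tileSucc :
    7 ∈ closedWalkLengths (fun i j => j ∈ tileSucc i) 0 :=
  ⟨Fin.ofNat 7, by unfold IsClosedWalk; decide⟩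

theorem mem_iterate_biUnion_of_walk {V : Type*} [DecidableEq V] {succ : V → Finset V} {f : ℤ → V}
    (hf : ∀ n, f (n + 1) ∈ succ (f n)) (n : ℤ) (k : ℕ) :
    f (n + k) ∈ (fun s : Finset V => s.biUnion succ)^[k] {f n} := by
  induction k with
  | zero => simp
  | succ k ih =>
    rw [Function.iterate_succ_apply', Nat.cast_succ, ← add_assoc]
    exact Finset.mem_biUnion.2 ⟨_, ih, hf _⟩

theorem tileColor_ne_of_mem_iterate :
    ∀ k ∈ ({1, 5, 8} : Finset ℕ), ∀ i,
      ∀ j ∈ (fun s : Finset (Fin 7) => s.biUnion tileSucc)^[k] {i},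
        tileColor i ≠ tileColor j := by
  decide

theorem isDistanceColoring_tileColor {f : ℤ → Fin 7} (hf : ∀ n, f (n + 1) ∈ tileSucc (f n)) :
    IsDistanceColoring {1, 5, 8} (tileColor ∘ f) := fun n a ha =>
  tileColor_ne_of_mem_iterate a ha _ _ (mem_iterate_biUnion_of_walk hf n a)

theorem exists_isBorelColoring_four : ∃ c : FreePart → Fin 4, IsBorelColoring {1, 5, 8} c := by
  obtain ⟨f, hf, hf_walk⟩ := exists_measurable_walk_of_coprime (X := FreePart) (by decide)
    (by decide) (by decide) three_mem_closedWalkLengths_tileSucc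
    seven_mem_closedWalkLengths_tileSucc
  refine ⟨tileColor ∘ f, isBorelColoring_iff.2
    ⟨(measurable_of_countable tileColor).comp hf, fun x => ?_⟩⟩
  refine isDistanceColoring_tileColor (f := fun n => f (n +ᵥ x)) fun n => ?_
  simpa only [add_comm n 1, add_vadd] using hf_walk (n +ᵥ x)

end Tiling

/-- `χ(1, 5, 8) = 4`: for `S = {±1, ±5, ±8}` there is a Borel proper
`4`-coloring of `G_S` on `F(2^ℤ)`, but no Borel proper `3`-coloring. -/
theorem borelChromatic_one_five_eight :
    borelChromatic {1, 5, 8} = 4 ∧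
    (∃ c : {x : ℤ → Bool // x ∈ FreePart} → Fin 4,
        IsBorelColoring {1, 5, 8} c) ∧
    ¬ ∃ c : {x : ℤ → Bool // x ∈ FreePart} → Fin 3,
        IsBorelColoring {1, 5, 8} c := by
  have h := And.intro exists_isBorelColoring_four not_exists_isBorelColoring_three
  exact ⟨borelChromatic_eq_succ_iff.2 h, h⟩
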